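/- Every one of the 240 vectors Aₙ, Bₙ, Cₙ, Dₙ, Eₙ, Fₙ, Gₙ, Hₙ (n ∈ {0,…,29}) has Euclidean norm equal to 1 in ℂ⁴. -/

import Mathlib

noncomputable section
open Real Complex

namespace Triacontagonal

/-- The golden ratio. -/
def τ : ℝ := (1 + Real.sqrt 5) / 2

/-- The constant 3^(-1/2) * 5^(-1/4). -/
def k0 : ℝ := (3 : ℝ) ^ (-(1:ℝ)/2) * (5 : ℝ) ^ (-(1:ℝ)/4)

/-- `a` is the positive real with 2a² = 1 + 3^(-1/2)·5^(-1/4)·τ^(3/2). -/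
def a : ℝ := Real.sqrt ((1 + k0 * τ ^ ((3:ℝ)/2)) / 2)

/-- `b` is the positive real with 2b² = 1 + 3^(-1/2)·5^(-1/4)·τ^(-3/2). -/
def b : ℝ := Real.sqrt ((1 + k0 * τ ^ (-((3:ℝ)/2))) / 2)

/-- `c` is the positive real with 2c² = 1 - 3^(-1/2)·5^(-1/4)·τ^(-3/2). -/
def c : ℝ := Real.sqrt ((1 - k0 * τ ^ (-((3:ℝ)/2))) / 2)

/-- `d` is the positive real with 2d² = 1 - 3^(-1/2)·5^(-1/4)·τ^(3/2). -/
def d : ℝ := Real.sqrt ((1 - k0 * τ ^ ((3:ℝ)/2)) / 2)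

/-- `cc n = 2 cos(nπ/30)`. -/
def cc (n : ℤ) : ℝ := 2 * Real.cos (n * Real.pi / 30)

/-- `ω = exp(iπ/30)`, a primitive 60th root of unity. -/
def ω : ℂ := Complex.exp (Real.pi * Complex.I / 30)

def r1 : ℝ := a / cc 9
def r2 : ℝ := b / cc 9
def r3 : ℝ := c / cc 9
def r4 : ℝ := d / cc 9
def r5 : ℝ := a / cc 3
def r6 : ℝ := b / cc 3
def r7 : ℝ := c / cc 3
def r8 : ℝ := d / cc 3

/-- The eight cycles of 30 vectors each in ℂ⁴. -/
def A (n : Fin 30) : Fin 4 → ℂ :=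
  ![(r1 : ℂ) * ω ^ (2 * (n : ℕ)), (r4 : ℂ) * ω ^ (22 * (n : ℕ)),
    (r6 : ℂ) * ω ^ (14 * (n : ℕ) + 1), (r7 : ℂ) * ω ^ (26 * (n : ℕ) + 1)]

def B (n : Fin 30) : Fin 4 → ℂ :=
  ![(r2 : ℂ) * ω ^ (2 * (n : ℕ) + 29), (r3 : ℂ) * ω ^ (22 * (n : ℕ) + 19),
    -((r8 : ℂ) * ω ^ (14 * (n : ℕ) + 24)), -((r5 : ℂ) * ω ^ (26 * (n : ℕ) + 18))]

def C (n : Fin 30) : Fin 4 → ℂ :=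
  ![(r3 : ℂ) * ω ^ (2 * (n : ℕ) + 29), -((r2 : ℂ) * ω ^ (22 * (n : ℕ) + 19)),
    (r5 : ℂ) * ω ^ (14 * (n : ℕ) + 24), -((r8 : ℂ) * ω ^ (26 * (n : ℕ) + 18))]

def D (n : Fin 30) : Fin 4 → ℂ :=
  ![(r4 : ℂ) * ω ^ (2 * (n : ℕ)), -((r1 : ℂ) * ω ^ (22 * (n : ℕ))),
    (r7 : ℂ) * ω ^ (14 * (n : ℕ) + 1), -((r6 : ℂ) * ω ^ (26 * (n : ℕ) + 1))]

def E (n : Fin 30) : Fin 4 → ℂ :=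
  ![(r5 : ℂ) * ω ^ (2 * (n : ℕ)), (r8 : ℂ) * ω ^ (22 * (n : ℕ)),
    -((r2 : ℂ) * ω ^ (14 * (n : ℕ) + 1)), -((r3 : ℂ) * ω ^ (26 * (n : ℕ) + 1))]

def F (n : Fin 30) : Fin 4 → ℂ :=
  ![(r6 : ℂ) * ω ^ (2 * (n : ℕ) + 29), (r7 : ℂ) * ω ^ (22 * (n : ℕ) + 19),
    (r4 : ℂ) * ω ^ (14 * (n : ℕ) + 24), (r1 : ℂ) * ω ^ (26 * (n : ℕ) + 18)]

def G (n : Fin 30) : Fin 4 → ℂ :=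
  ![(r7 : ℂ) * ω ^ (2 * (n : ℕ) + 29), -((r6 : ℂ) * ω ^ (22 * (n : ℕ) + 19)),
    -((r1 : ℂ) * ω ^ (14 * (n : ℕ) + 24)), (r4 : ℂ) * ω ^ (26 * (n : ℕ) + 18)]

def H (n : Fin 30) : Fin 4 → ℂ :=
  ![(r8 : ℂ) * ω ^ (2 * (n : ℕ)), -((r5 : ℂ) * ω ^ (22 * (n : ℕ))),
    -((r3 : ℂ) * ω ^ (14 * (n : ℕ) + 1)), (r2 : ℂ) * ω ^ (26 * (n : ℕ) + 1)]

/-- The set of the 240 vectors. -/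
def S : Set (Fin 4 → ℂ) :=
  {v | ∃ n : Fin 30, v = A n ∨ v = B n ∨ v = C n ∨ v = D n ∨
    v = E n ∨ v = F n ∨ v = G n ∨ v = H n}

/-- The real inner product on ℂ⁴: ⟨v,w⟩_ℝ = Re(Σᵢ vᵢ · conj(wᵢ)). -/
def rinner (v w : Fin 4 → ℂ) : ℝ := (∑ i, v i * star (w i)).re

/-- The associated Euclidean norm. -/
def enorm (v : Fin 4 → ℂ) : ℝ := Real.sqrt (rinner v v)

/-!
Since `ω` has modulus one, the squared norm of each vector is a sum of four `rᵢ ^ 2`, and these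
group as `(a² + d²) / c₉² + (b² + c²) / c₃²` or `(b² + c²) / c₉² + (a² + d²) / c₃²`. The
definitions give `a² + d² = b² + c² = 1` once the radicands are known to be nonnegative, which
amounts to `τ³ ≤ 3√5`. Finally `c₃² = τ + 2` and `c₉² = 3 - τ` have sum and product both equal
to `5`, so their inverses add up to `1`.
-/

lemma enorm_eq_one_iff {v : Fin 4 → ℂ} : enorm v = 1 ↔ ∑ i, ‖v i‖ ^ 2 = 1 := by
  simp only [enorm, rinner, Real.sqrt_eq_one, star_def, mul_conj', ← ofReal_pow, ← ofReal_sum,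
    ofReal_re]

lemma norm_ω : ‖ω‖ = 1 := by
  have ω_eq : ω = exp ((π / 30 : ℝ) * I) := by
    rw [ω]
    push_cast
    ring_nf
  rw [ω_eq, norm_exp_ofReal_mul_I]

lemma norm_ofReal_mul_ω_pow_sq (r : ℝ) (m : ℕ) : ‖(r : ℂ) * ω ^ m‖ ^ 2 = r ^ 2 := by
  rw [norm_mul, norm_pow, norm_ω, one_pow, mul_one, norm_real, Real.norm_eq_abs, sq_abs]

lemma τ_sq : τ ^ 2 = τ + 1 := goldenRatio_sq

lemma one_lt_τ : 1 < τ := one_lt_goldenRatio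

lemma τ_pos : 0 < τ := goldenRatio_pos

lemma sqrt_five_eq : √5 = 2 * τ - 1 := by
  rw [τ]
  ring

lemma k0_pos : 0 < k0 := by
  rw [k0]
  positivity

lemma k0_sq : k0 ^ 2 = (3 * √5)⁻¹ := by
  rw [k0, mul_pow, ← rpow_mul_natCast (by norm_num), ← rpow_mul_natCast (by norm_num), mul_inv,
    ← rpow_neg_one 3, sqrt_eq_rpow, ← rpow_neg (by norm_num)]
  norm_num

lemma k0_mul_τ_rpow_three_halves_le_one : k0 * τ ^ (3 / 2 : ℝ) ≤ 1 := by
  have τ_rpow_sq : (τ ^ (3 / 2 : ℝ)) ^ 2 = τ ^ 3 := by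
    rw [← rpow_mul_natCast τ_pos.le, ← rpow_natCast]
    norm_num
  have τ_cube : τ ^ 3 = 2 * τ + 1 := by linear_combination (τ + 1) * τ_sq
  have τ_cube_le : τ ^ 3 ≤ 3 * √5 := by linarith [one_lt_τ, sqrt_five_eq]
  refine le_of_abs_le ((sq_le_one_iff_abs_le_one _).mp ?_)
  rw [mul_pow, k0_sq, τ_rpow_sq]
  exact inv_mul_le_one_of_le₀ τ_cube_le (by positivity)

lemma abs_k0_mul_τ_rpow_le_one {s : ℝ} (hs : s ≤ 3 / 2) : |k0 * τ ^ s| ≤ 1 := by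
  rw [abs_of_pos (mul_pos k0_pos (rpow_pos_of_pos τ_pos s))]
  calc k0 * τ ^ s ≤ k0 * τ ^ (3 / 2 : ℝ) :=
        mul_le_mul_of_nonneg_left (rpow_le_rpow_of_exponent_le one_lt_τ.le hs) k0_pos.le
    _ ≤ 1 := k0_mul_τ_rpow_three_halves_le_one

lemma sqrt_half_one_add_sq_add_sqrt_half_one_sub_sq {x : ℝ} (hx : |x| ≤ 1) :
    √((1 + x) / 2) ^ 2 + √((1 - x) / 2) ^ 2 = 1 := by
  obtain ⟨neg_one_le_x, x_le_one⟩ := abs_le.mp hx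
  rw [sq_sqrt (by linarith), sq_sqrt (by linarith)]
  ring

lemma a_sq_add_d_sq : a ^ 2 + d ^ 2 = 1 :=
  sqrt_half_one_add_sq_add_sqrt_half_one_sub_sq (abs_k0_mul_τ_rpow_le_one le_rfl)

lemma b_sq_add_c_sq : b ^ 2 + c ^ 2 = 1 :=
  sqrt_half_one_add_sq_add_sqrt_half_one_sub_sq (abs_k0_mul_τ_rpow_le_one (by norm_num))

lemma cos_pi_div_five_eq_τ_div_two : Real.cos (π / 5) = τ / 2 := by
  rw [cos_pi_div_five, τ]
  ring

lemma cc_three_sq : cc 3 ^ 2 = τ + 2 := by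
  have double_angle : π / 5 = 2 * (((3 : ℤ) : ℝ) * π / 30) := by
    push_cast
    ring
  have cos_double := cos_pi_div_five_eq_τ_div_two
  rw [double_angle, Real.cos_two_mul] at cos_double
  rw [cc]
  linear_combination 2 * cos_double

lemma cc_nine_sq : cc 9 ^ 2 = 3 - τ := by
  have complement : ((9 : ℤ) : ℝ) * π / 30 = π / 2 - π / 5 := by
    push_cast
    ring
  rw [cc, complement, Real.cos_pi_div_two_sub, mul_pow, Real.sin_sq, cos_pi_div_five_eq_τ_div_two]
  linear_combination -τ_sq

lemma one_div_cc_nine_sq_add_one_div_cc_three_sq : 1 / cc 9 ^ 2 + 1 / cc 3 ^ 2 = 1 := by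
  have sq_mul_sq : (3 - τ) * (τ + 2) = 5 := by linear_combination -τ_sq
  obtain ⟨three_sub_ne, add_two_ne⟩ : 3 - τ ≠ 0 ∧ τ + 2 ≠ 0 :=
    mul_ne_zero_iff.mp (by rw [sq_mul_sq]; norm_num)
  rw [cc_nine_sq, cc_three_sq, one_div_add_one_div three_sub_ne add_two_ne, sq_mul_sq]
  ring

lemma r1_r4_r6_r7_sum_sq : r1 ^ 2 + r4 ^ 2 + r6 ^ 2 + r7 ^ 2 = 1 := by
  simp only [r1, r4, r6, r7, div_pow]
  rw [← add_div, a_sq_add_d_sq, add_assoc, ← add_div, b_sq_add_c_sq,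
    one_div_cc_nine_sq_add_one_div_cc_three_sq]

lemma r2_r3_r5_r8_sum_sq : r2 ^ 2 + r3 ^ 2 + r5 ^ 2 + r8 ^ 2 = 1 := by
  simp only [r2, r3, r5, r8, div_pow]
  rw [← add_div, b_sq_add_c_sq, add_assoc, ← add_div, a_sq_add_d_sq,
    one_div_cc_nine_sq_add_one_div_cc_three_sq]

/-- every one of the 240 vectors has Euclidean norm 1. -/
theorem stmt5 : ∀ v ∈ S, enorm v = 1 := by
  rintro v ⟨n, hv⟩
  rw [enorm_eq_one_iff, Fin.sum_univ_four]
  rcases hv with rfl | rfl | rfl | rfl | rfl | rfl | rfl | rfl <;>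
    simp only [A, B, C, D, E, F, G, H, Matrix.cons_val, norm_neg, norm_ofReal_mul_ω_pow_sq] <;>
    linarith [r1_r4_r6_r7_sum_sq, r2_r3_r5_r8_sum_sq]

end Triacontagonal
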